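/- Let K be a field, m ≥ 2, N ≥ 1, and let Λ_N = KQ/I_N where Q is the quiver with vertices 0,…,m-1 and arrows a_i : i → i+1, ā_i : i+1 → i (indices mod m), and I_N is generated by a_i a_{i+1}, ā_{i-1} ā_{i-2}, and (a_i ā_i)^N − (ā_{i-1} a_{i-1})^N for all i. Then the centre Z(Λ_N) has K-dimension Nm + 1, with K-basis {1} ∪ {(a_i ā_i)^N : 0 ≤ i ≤ m-1} ∪ {(a_i ā_i)^s + (ā_i a_i)^s : 0 ≤ i ≤ m-1, 1 ≤ s ≤ N-1}. -/

import Mathlib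

/-- Generators of the path algebra of the cyclic double quiver:
trivial paths `e i`, arrows `a i : i → i+1` and `abar i : i+1 → i`. -/
inductive Gen (m : ℕ) : Type
  | e (i : ZMod m)
  | a (i : ZMod m)
  | abar (i : ZMod m)

variable (K : Type) [Field K] (m N : ℕ) [NeZero m]

/-- The trivial path `e i` in the free algebra. -/
def Efree (i : ZMod m) : FreeAlgebra K (Gen m) := FreeAlgebra.ι K (Gen.e i)
/-- The arrow `a_i : i → i+1` in the free algebra. -/
def Afree (i : ZMod m) : FreeAlgebra K (Gen m) := FreeAlgebra.ι K (Gen.a i)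
/-- The arrow `ā_i : i+1 → i` in the free algebra. -/
def ABfree (i : ZMod m) : FreeAlgebra K (Gen m) := FreeAlgebra.ι K (Gen.abar i)

/-- The defining relations of `Λ_N = KQ/I_N`: the path algebra relations for the
quiver `Q` together with the relations generating `I_N`. -/
inductive LamRel : FreeAlgebra K (Gen m) → FreeAlgebra K (Gen m) → Prop
  | idem (i : ZMod m) : LamRel (Efree K m i * Efree K m i) (Efree K m i)
  | orth (i j : ZMod m) (h : i ≠ j) : LamRel (Efree K m i * Efree K m j) 0
  | sum_e : LamRel (∑ i : ZMod m, Efree K m i) 1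
  | src_a (i : ZMod m) : LamRel (Efree K m i * Afree K m i) (Afree K m i)
  | tgt_a (i : ZMod m) : LamRel (Afree K m i * Efree K m (i + 1)) (Afree K m i)
  | src_ab (i : ZMod m) : LamRel (Efree K m (i + 1) * ABfree K m i) (ABfree K m i)
  | tgt_ab (i : ZMod m) : LamRel (ABfree K m i * Efree K m i) (ABfree K m i)
  | zero_aa (i : ZMod m) : LamRel (Afree K m i * Afree K m (i + 1)) 0
  | zero_abab (i : ZMod m) : LamRel (ABfree K m i * ABfree K m (i - 1)) 0
  | comm (i : ZMod m) :
      LamRel ((Afree K m i * ABfree K m i) ^ N) ((ABfree K m (i - 1) * Afree K m (i - 1)) ^ N)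

/-- The special biserial algebra `Λ_N = KQ/I_N`. -/
abbrev Lam : Type := RingQuot (LamRel K m N)

/-- The trivial path `e_i` in `Λ_N`. -/
def e (i : ZMod m) : Lam K m N := RingQuot.mkAlgHom K (LamRel K m N) (Efree K m i)
/-- The arrow `a_i` in `Λ_N`. -/
def a (i : ZMod m) : Lam K m N := RingQuot.mkAlgHom K (LamRel K m N) (Afree K m i)
/-- The arrow `ā_i` in `Λ_N`. -/
def ab (i : ZMod m) : Lam K m N := RingQuot.mkAlgHom K (LamRel K m N) (ABfree K m i)

/-- The claimed basis of the centre of `Λ_N`: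
`1`, the elements `(a_i ā_i)^N`, and the elements `(a_i ā_i)^s + (ā_i a_i)^s`
for `0 ≤ i ≤ m-1` and `1 ≤ s ≤ N-1`. -/
def centreBasisFam : Unit ⊕ ZMod m ⊕ (ZMod m × Fin (N - 1)) → Lam K m N
  | Sum.inl _ => 1
  | Sum.inr (Sum.inl i) => (a K m N i * ab K m N i) ^ N
  | Sum.inr (Sum.inr (i, s)) =>
      (a K m N i * ab K m N i) ^ ((s : ℕ) + 1) + (ab K m N i * a K m N i) ^ ((s : ℕ) + 1)

/-!
`Λ_N` is a symmetric algebra: the linear form which is `1` on the nonzero paths of length `2N` and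
`0` on all shorter paths is a nondegenerate trace. Hence the centre is dual to `Λ_N / [Λ_N, Λ_N]`.
Modulo commutators a path of odd length vanishes, since its end points differ when `m ≥ 2`; the two
closed paths `(a_i ā_i)^s` and `(ā_i a_i)^s` agree; and with `(a_i ā_i)^N = (ā_{i-1} a_{i-1})^N`
this makes all paths of length `2N` agree. So the trivial paths, the `(a_i ā_i)^s` with `0 < s < N`
and a single path of length `2N` span the quotient, and the proposed basis of the centre is dual to
them. The trace form itself comes from letting the two arrows of each edge act by off-diagonal
`2 × 2` matrices over `K[X]` and taking the sum of the traces in degree `2N`.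
-/

open Polynomial

section DualFamily

variable {R M ι : Type*} [CommRing R] [AddCommGroup M] [Module R M] [DecidableEq ι]
  {v : ι → M} (f : ι → Module.Dual R M)

theorem sum_dual_apply_smul_eq_of_mem_span [Fintype ι]
    (hfv : ∀ i j, f i (v j) = if i = j then 1 else 0) {z : M}
    (hz : z ∈ Submodule.span R (Set.range v)) : ∑ i, f i z • v i = z := by
  obtain ⟨c, rfl⟩ := (Submodule.mem_span_range_iff_exists_fun R).1 hz
  simp [hfv]

theorem span_range_eq_of_dual_apply [Finite ι]
    (hfv : ∀ i j, f i (v j) = if i = j then 1 else 0) {S : Submodule R M}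
    (hv : ∀ i, v i ∈ S) (hS : ∀ z ∈ S, (∀ i, f i z = 0) → z = 0) :
    Submodule.span R (Set.range v) = S := by
  cases nonempty_fintype ι
  refine le_antisymm (Submodule.span_le.2 (Set.range_subset_iff.2 hv)) fun z hz => ?_
  rw [Submodule.mem_span_range_iff_exists_fun]
  refine ⟨fun i => f i z, (sub_eq_zero.1 (hS _ (S.sub_mem hz ?_) fun i => ?_)).symm⟩
  · exact S.sum_mem fun i _ => S.smul_mem _ (hv i)
  · simp [hfv]

end DualFamily

theorem piSingle_matrixSingle_mul_of_ne {ι n R : Type*} [DecidableEq ι] [Fintype n] [DecidableEq n]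
    [NonUnitalNonAssocSemiring R] (i j : ι) (a : n) {b c : n} (d : n) (h : b ≠ c) (r s : R) :
    (Pi.single i (Matrix.single a b r) * Pi.single j (Matrix.single c d s) : ι → Matrix n n R) =
      0 := by
  obtain rfl | hij := eq_or_ne i j
  · rw [← Pi.single_mul, Matrix.single_mul_single_of_ne _ _ _ _ h, Pi.single_zero]
  · rw [← Pi.single_mul_left, Pi.single_eq_of_ne hij, mul_zero, Pi.single_zero]

section RingQuotLinear

variable {R A M : Type*} [CommRing R] [Ring A] [Algebra R A] [AddCommGroup M] [Module R M]

theorem map_eq_of_mkAlgHom_eq {r : A → A → Prop} (φ : A →ₗ[R] M)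
    (h : ∀ ⦃x y⦄, r x y → ∀ u v, φ (u * x * v) = φ (u * y * v)) {x y : A}
    (hxy : RingQuot.mkAlgHom R r x = RingQuot.mkAlgHom R r y) : φ x = φ y := by
  let c : RingCon A :=
    { r := fun x y => ∀ u v, φ (u * x * v) = φ (u * y * v)
      iseqv := ⟨fun _ _ _ => rfl, fun h u v => (h u v).symm, fun h h' u v => (h u v).trans (h' u v)⟩
      add' := fun h h' u v => by simp only [mul_add, add_mul, map_add, h u v, h' u v]
      mul' := fun {w x y z} h h' u v => by
        calc φ (u * (w * y) * v) = φ (u * w * (y * v)) := by simp only [mul_assoc]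
          _ = φ (u * x * y * v) := by rw [h, mul_assoc _ y]
          _ = φ (u * (x * z) * v) := by rw [h', mul_assoc u] }
  have hc_of_rel : ∀ ⦃x y⦄, r x y → c.mk' x = c.mk' y := fun _ _ hr => c.eq.2 (h hr)
  have hlift (w : A) :
      RingQuot.lift ⟨c.mk', hc_of_rel⟩ (RingQuot.mkAlgHom R r w) = c.mk' w := by
    rw [← RingHom.coe_coe (RingQuot.mkAlgHom R r), RingQuot.mkAlgHom_coe,
      RingQuot.lift_mkRingHom_apply]
  have hc : c x y := c.eq.1 (by rw [← RingCon.coe_mk', ← hlift, hxy, hlift])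
  simpa using hc 1 1

/-- The linear map on `RingQuot r` induced by a linear map `φ` that takes equal values on
`u * x * v` and `u * y * v` whenever `r x y`; unlike in `RingQuot.liftAlgHom`, the map `φ` need not
be multiplicative. -/
noncomputable def ringQuotLiftLinear {r : A → A → Prop} (φ : A →ₗ[R] M)
    (h : ∀ ⦃x y⦄, r x y → ∀ u v, φ (u * x * v) = φ (u * y * v)) : RingQuot r →ₗ[R] M :=
  (LinearMap.ker (RingQuot.mkAlgHom R r).toLinearMap).liftQ φ
      (fun x hx => by
        simpa using map_eq_of_mkAlgHom_eq (y := 0) φ h ((LinearMap.mem_ker.1 hx).trans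
          (map_zero _).symm)) ∘ₗ
    ((RingQuot.mkAlgHom R r).toLinearMap.quotKerEquivOfSurjective
      (RingQuot.mkAlgHom_surjective R r)).symm

theorem ringQuotLiftLinear_mkAlgHom {r : A → A → Prop} (φ : A →ₗ[R] M)
    (h : ∀ ⦃x y⦄, r x y → ∀ u v, φ (u * x * v) = φ (u * y * v)) (x : A) :
    ringQuotLiftLinear φ h (RingQuot.mkAlgHom R r x) = φ x := by
  have hx : (RingQuot.mkAlgHom R r).toLinearMap.quotKerEquivOfSurjective
      (RingQuot.mkAlgHom_surjective R r) (Submodule.Quotient.mk x) = RingQuot.mkAlgHom R r x := rfl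
  rw [ringQuotLiftLinear, LinearMap.comp_apply, ← hx, LinearEquiv.coe_coe,
    LinearEquiv.symm_apply_apply]
  rfl

end RingQuotLinear

namespace Lam

section EdgeRep

variable {K : Type} [Field K] {m N : ℕ}

/-- The source of the arrow `a_i : i → i + 1` (for `true`) or `ā_i : i + 1 → i` (for `false`).
The Boolean orientation treats the two arrows along an edge uniformly; the target of the arrow with
orientation `σ` is `source (!σ) i`. -/
def source : Bool → ZMod m → ZMod m
  | true, i => i
  | false, i => i + 1

theorem source_injective (σ : Bool) : Function.Injective (source σ : ZMod m → ZMod m) := by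
  cases σ
  · exact add_left_injective 1
  · exact Function.injective_id

theorem source_not_ne (hm : 2 ≤ m) (σ : Bool) (i : ZMod m) : source (!σ) i ≠ source σ i := by
  have : Fact (1 < m) := ⟨hm⟩
  cases σ <;> simp [source]

variable (K) in
/-- The arrow `a_i` (for `true`) or `ā_i` (for `false`) in the free algebra. -/
def arrowFree : Bool → ZMod m → FreeAlgebra K (Gen m)
  | true, i => Afree K m i
  | false, i => ABfree K m i

variable (K) in
/-- The path of length `n` along the edge `i` which starts with the arrow of orientation `σ` and
alternates between the two arrows, in the free algebra. Its last vertex is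
`source (not^[n] σ) i`. -/
def pathFree : Bool → ZMod m → ℕ → FreeAlgebra K (Gen m)
  | σ, i, 0 => Efree K m (source σ i)
  | σ, i, n + 1 => arrowFree K σ i * pathFree (!σ) i n

variable (K m) in
/-- The representation of the path algebra by one `2 × 2` matrix over `K[X]` for each edge `k`, in
which `a_k` and `ā_k` act as `X` times an off-diagonal matrix unit. It respects every relation of
`Λ_N` except `(a_i ā_i)^N = (ā_{i-1} a_{i-1})^N`, and it sends a path of length `n` to a multiple
of `X ^ n`. -/
noncomputable def edgeRep : FreeAlgebra K (Gen m) →ₐ[K] (ZMod m → Matrix Bool Bool K[X]) :=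
  FreeAlgebra.lift K fun
    | .e i => fun k => Matrix.diagonal fun σ => if source σ k = i then 1 else 0
    | .a i => Pi.single i (Matrix.single true false X)
    | .abar i => Pi.single i (Matrix.single false true X)

theorem edgeRep_Efree (i : ZMod m) : edgeRep K m (Efree K m i) =
    fun k => Matrix.diagonal fun σ => if source σ k = i then 1 else 0 :=
  FreeAlgebra.lift_ι_apply _ _

theorem edgeRep_arrowFree (σ : Bool) (i : ZMod m) :
    edgeRep K m (arrowFree K σ i) = Pi.single i (Matrix.single σ (!σ) X) := by
  cases σ <;> exact FreeAlgebra.lift_ι_apply _ _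

theorem edgeRep_Efree_mul_arrowFree (σ : Bool) (i : ZMod m) :
    edgeRep K m (Efree K m (source σ i) * arrowFree K σ i) = edgeRep K m (arrowFree K σ i) := by
  rw [map_mul, edgeRep_Efree, edgeRep_arrowFree, ← Pi.single_mul_right]
  congr 1
  ext σ' τ : 2
  rw [Matrix.diagonal_mul, Matrix.single_apply]
  grind

theorem edgeRep_arrowFree_mul_Efree (σ : Bool) (i : ZMod m) :
    edgeRep K m (arrowFree K σ i * Efree K m (source (!σ) i)) = edgeRep K m (arrowFree K σ i) := by
  rw [map_mul, edgeRep_Efree, edgeRep_arrowFree, ← Pi.single_mul_left]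
  congr 1
  ext σ' τ : 2
  rw [Matrix.mul_diagonal, Matrix.single_apply]
  grind

theorem edgeRep_arrowFree_mul_arrowFree_self (σ : Bool) (i j : ZMod m) :
    edgeRep K m (arrowFree K σ i * arrowFree K σ j) = 0 := by
  rw [map_mul, edgeRep_arrowFree, edgeRep_arrowFree,
    piSingle_matrixSingle_mul_of_ne _ _ _ _ (Bool.not_ne_self σ)]

theorem edgeRep_Efree_mul_Efree (i j : ZMod m) : edgeRep K m (Efree K m i * Efree K m j) =
    if i = j then edgeRep K m (Efree K m i) else 0 := by
  rw [map_mul, edgeRep_Efree, edgeRep_Efree]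
  funext k
  rw [Pi.mul_apply, Matrix.diagonal_mul_diagonal]
  split_ifs with hij
  · simp [hij]
  · have horth (σ : Bool) : ¬(source σ k = j ∧ source σ k = i) := by grind
    simp [← ite_and, horth]

theorem edgeRep_arrowFree_mul_arrowFree_not_pow (σ : Bool) (i : ZMod m) {n : ℕ} (hn : n ≠ 0) :
    edgeRep K m ((arrowFree K σ i * arrowFree K (!σ) i) ^ n) =
      Pi.single i (Matrix.single σ σ (X ^ (2 * n))) := by
  rw [map_pow, map_mul, edgeRep_arrowFree, edgeRep_arrowFree, ← Pi.single_mul, Bool.not_not,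
    Matrix.single_mul_single_same, ← pow_two]
  induction n, Nat.one_le_iff_ne_zero.2 hn using Nat.le_induction with
  | base => rw [pow_one, mul_one]
  | succ n hn ih =>
    rw [pow_succ, ih (by omega), ← Pi.single_mul, Matrix.single_mul_single_same, ← pow_add,
      Nat.mul_succ]

theorem edgeRep_pathFree_succ (σ : Bool) (i : ZMod m) (n : ℕ) :
    edgeRep K m (pathFree K σ i (n + 1)) =
      Pi.single i (Matrix.single σ (not^[n + 1] σ) (X ^ (n + 1))) := by
  induction n generalizing σ with
  | zero => rw [pathFree, pathFree, edgeRep_arrowFree_mul_Efree, edgeRep_arrowFree]; simp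
  | succ n ih =>
    rw [pathFree, map_mul, edgeRep_arrowFree, ih, ← Pi.single_mul, Matrix.single_mul_single_same,
      ← pow_succ', ← Function.iterate_succ_apply]

theorem exists_map_constantCoeff_edgeRep (w : FreeAlgebra K (Gen m)) : ∃ d : ZMod m → K, ∀ k,
    (edgeRep K m w k).map constantCoeff = Matrix.diagonal fun σ => d (source σ k) := by
  have arrow_case (σ : Bool) (i : ZMod m) : ∃ d : ZMod m → K, ∀ k,
      (edgeRep K m (arrowFree K σ i) k).map constantCoeff =
        Matrix.diagonal fun σ => d (source σ k) := by
    refine ⟨0, fun k => ?_⟩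
    rw [edgeRep_arrowFree]
    obtain rfl | hk := eq_or_ne k i
    · simp
    · simp [hk]
  induction w using FreeAlgebra.induction with
  | grade0 c =>
    refine ⟨fun _ => c, fun k => ?_⟩
    rw [AlgHom.commutes, Pi.algebraMap_apply, Matrix.algebraMap_eq_diagonal,
      Matrix.diagonal_map (map_zero _)]
    simp
  | grade1 g =>
    cases g with
    | e i =>
      refine ⟨fun v => if v = i then 1 else 0, fun k => ?_⟩
      rw [← Efree, edgeRep_Efree, Matrix.diagonal_map (map_zero _)]
      simp [apply_ite]
    | a i => exact arrow_case true i
    | abar i => exact arrow_case false i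
  | mul x y hx hy =>
    obtain ⟨dx, hx⟩ := hx
    obtain ⟨dy, hy⟩ := hy
    refine ⟨dx * dy, fun k => ?_⟩
    rw [map_mul, Pi.mul_apply, Matrix.map_mul, hx, hy, Matrix.diagonal_mul_diagonal]
    rfl
  | add x y hx hy =>
    obtain ⟨dx, hx⟩ := hx
    obtain ⟨dy, hy⟩ := hy
    refine ⟨dx + dy, fun k => ?_⟩
    rw [map_add, Pi.add_apply, Matrix.map_add _ (map_add _), hx, hy, Matrix.diagonal_add]
    rfl

variable [NeZero m]

theorem edgeRep_sum_Efree : edgeRep K m (∑ i, Efree K m i) = 1 := by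
  simp only [map_sum, edgeRep_Efree]
  ext : 3
  simp [Matrix.sum_apply, Matrix.diagonal_apply, Matrix.one_apply]

variable (K m N) in
/-- The symmetrizing form of `Λ_N`, on the level of `edgeRep`: the sum of the traces, in degree
`2 * N`. -/
noncomputable def traceForm : (ZMod m → Matrix Bool Bool K[X]) →ₗ[K] K :=
  ∑ k, lcoeff K (2 * N) ∘ₗ Matrix.traceLinearMap Bool K K[X] ∘ₗ LinearMap.proj k

theorem traceForm_apply (M : ZMod m → Matrix Bool Bool K[X]) :
    traceForm K m N M = ∑ k, (M k).trace.coeff (2 * N) := by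
  simp [traceForm]

theorem traceForm_mul_comm (M M' : ZMod m → Matrix Bool Bool K[X]) :
    traceForm K m N (M * M') = traceForm K m N (M' * M) := by
  simp only [traceForm_apply, Pi.mul_apply, Matrix.trace_mul_comm (M _)]

theorem traceForm_mul_single (M : ZMod m → Matrix Bool Bool K[X]) (i : ZMod m) (σ τ : Bool)
    (p : K[X]) : traceForm K m N (M * Pi.single i (Matrix.single σ τ p)) =
      (M i τ σ * p).coeff (2 * N) := by
  rw [traceForm_apply, Finset.sum_eq_single_of_mem i (Finset.mem_univ i)]
  · simp [Matrix.trace_mul_single]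
  · intro k _ hk
    simp [hk]

theorem traceForm_edgeRep_mul_comm_relation (hN : N ≠ 0) (w : FreeAlgebra K (Gen m)) (i : ZMod m) :
    traceForm K m N (edgeRep K m (w * (Afree K m i * ABfree K m i) ^ N)) =
      traceForm K m N (edgeRep K m (w * (ABfree K m (i - 1) * Afree K m (i - 1)) ^ N)) := by
  obtain ⟨d, hd⟩ := exists_map_constantCoeff_edgeRep w
  have hdiag (σ : Bool) (k : ZMod m) : traceForm K m N (edgeRep K m
      (w * (arrowFree K σ k * arrowFree K (!σ) k) ^ N)) = d (source σ k) := by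
    rw [map_mul, edgeRep_arrowFree_mul_arrowFree_not_pow σ k hN, traceForm_mul_single,
      coeff_mul_X_pow', if_pos le_rfl, Nat.sub_self]
    simpa using congr_fun₂ (hd k) σ σ
  refine (hdiag true i).trans (.trans ?_ (hdiag false (i - 1)).symm)
  rw [source, source, sub_add_cancel]

theorem traceForm_edgeRep_eq_of_lamRel {x y : FreeAlgebra K (Gen m)} (h : LamRel K m N x y)
    (u v : FreeAlgebra K (Gen m)) : traceForm K m N (edgeRep K m (u * x * v)) =
      traceForm K m N (edgeRep K m (u * y * v)) := by
  have of_edgeRep_eq {x y : FreeAlgebra K (Gen m)} (hxy : edgeRep K m x = edgeRep K m y) :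
      traceForm K m N (edgeRep K m (u * x * v)) = traceForm K m N (edgeRep K m (u * y * v)) := by
    simp only [map_mul, hxy]
  cases h with
  | idem i => exact of_edgeRep_eq (by rw [edgeRep_Efree_mul_Efree, if_pos rfl])
  | orth i j hij => exact of_edgeRep_eq (by rw [edgeRep_Efree_mul_Efree, if_neg hij, map_zero])
  | sum_e => exact of_edgeRep_eq (by rw [edgeRep_sum_Efree, map_one])
  | src_a i => exact of_edgeRep_eq (edgeRep_Efree_mul_arrowFree true i)
  | tgt_a i => exact of_edgeRep_eq (edgeRep_arrowFree_mul_Efree true i)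
  | src_ab i => exact of_edgeRep_eq (edgeRep_Efree_mul_arrowFree false i)
  | tgt_ab i => exact of_edgeRep_eq (edgeRep_arrowFree_mul_Efree false i)
  | zero_aa i =>
    exact of_edgeRep_eq ((edgeRep_arrowFree_mul_arrowFree_self true i _).trans (map_zero _).symm)
  | zero_abab i =>
    exact of_edgeRep_eq ((edgeRep_arrowFree_mul_arrowFree_self false i _).trans (map_zero _).symm)
  | comm i =>
    obtain rfl | hN := eq_or_ne N 0
    · rfl
    have rotate (z : FreeAlgebra K (Gen m)) : traceForm K m N (edgeRep K m (u * z * v)) =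
        traceForm K m N (edgeRep K m (v * u * z)) := by
      rw [map_mul, traceForm_mul_comm, ← map_mul, mul_assoc]
    rw [rotate, rotate, traceForm_edgeRep_mul_comm_relation hN]

end EdgeRep

section Paths

variable {K : Type} [Field K] {m N : ℕ} [NeZero m]

local notation "Λ" => Lam K m N

local notation "ε" => e K m N

/-- The arrow `a_i` (for `true`) or `ā_i` (for `false`) in `Λ_N`. -/
def arrow (σ : Bool) (i : ZMod m) : Λ := RingQuot.mkAlgHom K (LamRel K m N) (arrowFree K σ i)

/-- The image of `pathFree` in `Λ_N`; these elements and `0` are all the paths in `Λ_N`. -/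
def path (σ : Bool) (i : ZMod m) (n : ℕ) : Λ :=
  RingQuot.mkAlgHom K (LamRel K m N) (pathFree K σ i n)

theorem path_zero (σ : Bool) (i : ZMod m) : (path σ i 0 : Λ) = ε (source σ i) := rfl

theorem path_succ (σ : Bool) (i : ZMod m) (n : ℕ) :
    (path σ i (n + 1) : Λ) = arrow σ i * path (!σ) i n :=
  map_mul _ _ _

theorem e_mul_e (i j : ZMod m) : ε i * ε j = if i = j then ε i else 0 := by
  simp only [e, ← map_mul]
  split_ifs with hij
  · rw [← hij, RingQuot.mkAlgHom_rel K (.idem i)]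
  · rw [RingQuot.mkAlgHom_rel K (.orth i j hij), map_zero]

theorem sum_e : ∑ i, ε i = 1 := by
  simp only [e, ← map_sum]
  rw [RingQuot.mkAlgHom_rel K .sum_e, map_one]

theorem e_source_mul_arrow (σ : Bool) (i : ZMod m) : ε (source σ i) * arrow σ i = arrow σ i := by
  rw [e, arrow, ← map_mul]
  cases σ
  · exact RingQuot.mkAlgHom_rel K (.src_ab i)
  · exact RingQuot.mkAlgHom_rel K (.src_a i)

theorem arrow_mul_e_source (σ : Bool) (i : ZMod m) :
    arrow σ i * ε (source (!σ) i) = arrow σ i := by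
  rw [e, arrow, ← map_mul]
  cases σ
  · exact RingQuot.mkAlgHom_rel K (.tgt_ab i)
  · exact RingQuot.mkAlgHom_rel K (.tgt_a i)

theorem path_one (σ : Bool) (i : ZMod m) : (path σ i 1 : Λ) = arrow σ i := by
  rw [path_succ, path_zero, arrow_mul_e_source]

theorem e_source_mul_path (σ : Bool) (i : ZMod m) (n : ℕ) :
    ε (source σ i) * path σ i n = path σ i n := by
  cases n with
  | zero => rw [path_zero, e_mul_e, if_pos rfl]
  | succ n => rw [path_succ, ← mul_assoc, e_source_mul_arrow]

theorem e_mul_path (j : ZMod m) (σ : Bool) (i : ZMod m) (n : ℕ) :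
    ε j * path σ i n = if j = source σ i then path σ i n else 0 := by
  rw [← e_source_mul_path, ← mul_assoc, e_mul_e]
  split_ifs with h
  · rw [h]
  · rw [zero_mul]

theorem path_mul_path_iterate_not (σ : Bool) (i : ZMod m) (k l : ℕ) :
    (path σ i k * path (not^[k] σ) i l : Λ) = path σ i (k + l) := by
  induction k generalizing σ with
  | zero => rw [path_zero, Function.iterate_zero_apply, e_source_mul_path, zero_add]
  | succ k ih =>
    rw [path_succ, mul_assoc, Function.iterate_succ_apply, ih, ← path_succ, Nat.succ_add]

theorem path_mul_e (σ : Bool) (i j : ZMod m) (n : ℕ) :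
    path σ i n * ε j = if source (not^[n] σ) i = j then path σ i n else 0 := by
  nth_rw 1 [← add_zero n]
  rw [← path_mul_path_iterate_not, path_zero, mul_assoc, e_mul_e, mul_ite, mul_zero, ← path_zero,
    path_mul_path_iterate_not, add_zero]

theorem arrow_mul_arrow_of_source_ne {σ τ : Bool} {i j : ZMod m}
    (h : source (!σ) i ≠ source τ j) : (arrow σ i * arrow τ j : Λ) = 0 := by
  rw [← arrow_mul_e_source, ← e_source_mul_arrow τ, mul_assoc, ← mul_assoc (ε _), e_mul_e,
    if_neg h, zero_mul, mul_zero]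

theorem arrow_mul_arrow_self (σ : Bool) (i j : ZMod m) : (arrow σ i * arrow σ j : Λ) = 0 := by
  by_cases h : source (!σ) i = source σ j
  · rw [arrow, arrow, ← map_mul]
    cases σ
    · obtain rfl : i - 1 = j := sub_eq_of_eq_add h
      exact (RingQuot.mkAlgHom_rel K (.zero_abab i)).trans (map_zero _)
    · obtain rfl : i + 1 = j := h
      exact (RingQuot.mkAlgHom_rel K (.zero_aa i)).trans (map_zero _)
  · exact arrow_mul_arrow_of_source_ne h

theorem arrow_mul_path (σ τ : Bool) (i j : ZMod m) {n : ℕ} (hn : n ≠ 0) :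
    (arrow σ i * path τ j n : Λ) = if i = j ∧ (!σ) = τ then path σ i (n + 1) else 0 := by
  split_ifs with h
  · rw [← h.1, ← h.2, path_succ]
  · obtain ⟨n, rfl⟩ := Nat.exists_eq_succ_of_ne_zero hn
    suffices (arrow σ i * arrow τ j : Λ) = 0 by rw [path_succ, ← mul_assoc, this, zero_mul]
    obtain rfl | hτ := eq_or_ne τ σ
    · exact arrow_mul_arrow_self τ i j
    · obtain rfl : τ = !σ := Bool.eq_not_of_ne hτ
      exact arrow_mul_arrow_of_source_ne fun hij => h ⟨source_injective _ hij, rfl⟩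

theorem path_mul_path (σ τ : Bool) (i j : ZMod m) {k l : ℕ} (hk : k ≠ 0) (hl : l ≠ 0) :
    (path σ i k * path τ j l : Λ) = if i = j ∧ not^[k] σ = τ then path σ i (k + l) else 0 := by
  induction k, Nat.one_le_iff_ne_zero.2 hk using Nat.le_induction generalizing σ with
  | base => rw [path_one, arrow_mul_path _ _ _ _ hl, add_comm, Function.iterate_one]
  | succ k hk ih =>
    rw [path_succ, mul_assoc, ih _ (by omega), mul_ite, mul_zero, ← path_succ, Nat.succ_add,
      Function.iterate_succ_apply]

theorem path_mul_path_eq_zero_or_exists (σ τ : Bool) (i j : ZMod m) (k l : ℕ) :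
    (path σ i k * path τ j l : Λ) = 0 ∨
      ∃ ρ h, (path σ i k * path τ j l : Λ) = path ρ h (k + l) := by
  obtain rfl | hk := eq_or_ne k 0
  · rw [path_zero, e_mul_path, zero_add]
    grind
  obtain rfl | hl := eq_or_ne l 0
  · rw [path_zero, path_mul_e, add_zero]
    grind
  · rw [path_mul_path _ _ _ _ hk hl]
    grind

theorem arrow_mul_arrow_not_pow (σ : Bool) (i : ZMod m) {n : ℕ} (hn : n ≠ 0) :
    ((arrow σ i * arrow (!σ) i) ^ n : Λ) = path σ i (2 * n) := by
  have path_two : (arrow σ i * arrow (!σ) i : Λ) = path σ i 2 := by rw [path_succ, path_one]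
  induction n, Nat.one_le_iff_ne_zero.2 hn using Nat.le_induction with
  | base => rw [pow_one, mul_one, path_two]
  | succ n hn ih =>
    rw [pow_succ', ih (by omega), path_two, Nat.mul_succ, add_comm,
      ← path_mul_path_iterate_not _ _ 2]
    simp

theorem path_two_mul_eq_of_source_eq (hN : N ≠ 0) {σ τ : Bool} {i j : ZMod m}
    (h : source σ i = source τ j) : (path σ i (2 * N) : Λ) = path τ j (2 * N) := by
  have path_true (i : ZMod m) : (path true i (2 * N) : Λ) = path false (i - 1) (2 * N) := by
    rw [← arrow_mul_arrow_not_pow _ _ hN, ← arrow_mul_arrow_not_pow _ _ hN]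
    simp only [arrow, ← map_mul, ← map_pow]
    exact RingQuot.mkAlgHom_rel K (.comm i)
  have path_eq (σ : Bool) (i : ZMod m) :
      (path σ i (2 * N) : Λ) = path true (source σ i) (2 * N) := by
    cases σ
    · rw [path_true, source, add_sub_cancel_right]
    · rfl
  rw [path_eq σ, path_eq τ, h]

theorem path_eq_zero_of_two_mul_lt (hN : N ≠ 0) (σ : Bool) (i : ZMod m) {n : ℕ}
    (hn : 2 * N < n) : (path σ i n : Λ) = 0 := by
  obtain ⟨l, rfl⟩ := Nat.exists_eq_add_of_lt hn
  obtain ⟨j, hj⟩ : ∃ j : ZMod m, source (!σ) j = source σ i := by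
    cases σ
    · exact ⟨i + 1, rfl⟩
    · exact ⟨i - 1, sub_add_cancel i 1⟩
  rw [add_assoc, ← path_mul_path_iterate_not, path_two_mul_eq_of_source_eq hN hj.symm,
    path_mul_path _ _ _ _ (by omega) (by omega), if_neg]
  simp [Bool.involutive_not.iterate_two_mul]

end Paths

section SymmetrizingForm

variable {K : Type} [Field K] {m N : ℕ} [NeZero m]

local notation "Λ" => Lam K m N

/-- The symmetrizing form of `Λ_N`: the linear form taking the value `1` on the nonzero paths of
maximal length `2 * N` and `0` on all shorter paths. -/
noncomputable def symmForm : Λ →ₗ[K] K :=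
  ringQuotLiftLinear (traceForm K m N ∘ₗ (edgeRep K m).toLinearMap)
    fun _ _ h u v => traceForm_edgeRep_eq_of_lamRel h u v

theorem symmForm_mkAlgHom (w : FreeAlgebra K (Gen m)) :
    symmForm (RingQuot.mkAlgHom K (LamRel K m N) w) = traceForm K m N (edgeRep K m w) :=
  ringQuotLiftLinear_mkAlgHom _ _ w

theorem symmForm_mul_comm (x y : Λ) : symmForm (x * y) = symmForm (y * x) := by
  obtain ⟨u, rfl⟩ := RingQuot.mkAlgHom_surjective K (LamRel K m N) x
  obtain ⟨v, rfl⟩ := RingQuot.mkAlgHom_surjective K (LamRel K m N) y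
  simp only [← map_mul (RingQuot.mkAlgHom K (LamRel K m N)), symmForm_mkAlgHom]
  rw [map_mul, traceForm_mul_comm, ← map_mul]

theorem symmForm_path (hN : N ≠ 0) (σ : Bool) (i : ZMod m) (n : ℕ) :
    symmForm (path σ i n : Λ) = if n = 2 * N then 1 else 0 := by
  rw [path, symmForm_mkAlgHom]
  cases n with
  | zero =>
    rw [if_neg (by omega), pathFree, edgeRep_Efree, traceForm_apply]
    refine Finset.sum_eq_zero fun k _ => ?_
    simp [Matrix.trace, hN]
  | succ n =>
    rw [edgeRep_pathFree_succ, ← one_mul (Pi.single _ _), traceForm_mul_single, Pi.one_apply,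
      Matrix.one_apply]
    split_ifs with hσ hn hn
    · simp [hn]
    · simp [coeff_X_pow, Ne.symm hn]
    · rw [hn, Bool.involutive_not.iterate_two_mul] at hσ
      exact absurd rfl hσ
    · simp

theorem symmForm_path_mul_path_of_add_ne (hN : N ≠ 0) (σ τ : Bool) (i j : ZMod m) {k l : ℕ}
    (h : k + l ≠ 2 * N) : symmForm (path σ i k * path τ j l : Λ) = 0 := by
  obtain h0 | ⟨ρ, i', hp⟩ := path_mul_path_eq_zero_or_exists (K := K) (N := N) σ τ i j k l
  · rw [h0, map_zero]
  · rw [hp, symmForm_path hN, if_neg h]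

theorem span_range_path :
    Submodule.span K (Set.range fun p : Bool × ZMod m × ℕ => (path p.1 p.2.1 p.2.2 : Λ)) = ⊤ := by
  set S := Submodule.span K (Set.range fun p : Bool × ZMod m × ℕ => (path p.1 p.2.1 p.2.2 : Λ))
  have path_mem (σ : Bool) (i : ZMod m) (n : ℕ) : path σ i n ∈ S :=
    Submodule.subset_span ⟨(σ, i, n), rfl⟩
  have arrow_mem (σ : Bool) (i : ZMod m) : arrow σ i ∈ S := path_one (K := K) σ i ▸ path_mem σ i 1
  have one_mem : 1 ∈ S := by
    rw [← sum_e]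
    exact S.sum_mem fun i _ => path_mem true i 0
  have mul_mem {x y : Λ} (hx : x ∈ S) (hy : y ∈ S) : x * y ∈ S := by
    have hSS : S * S ≤ S := by
      rw [Submodule.span_mul_span, Submodule.span_le]
      rintro _ ⟨_, ⟨⟨σ, i, k⟩, rfl⟩, _, ⟨⟨τ, j, l⟩, rfl⟩, rfl⟩
      obtain h0 | ⟨ρ, i', hp⟩ := path_mul_path_eq_zero_or_exists (K := K) (N := N) σ τ i j k l
      · simp [h0]
      · simp [hp, path_mem]
    exact hSS (Submodule.mul_mem_mul hx hy)
  rw [eq_top_iff]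
  rintro z -
  obtain ⟨w, rfl⟩ := RingQuot.mkAlgHom_surjective K (LamRel K m N) z
  induction w using FreeAlgebra.induction with
  | grade0 c =>
    rw [AlgHom.commutes, Algebra.algebraMap_eq_smul_one]
    exact S.smul_mem c one_mem
  | grade1 g =>
    cases g with
    | e i => exact path_mem true i 0
    | a i => exact arrow_mem true i
    | abar i => exact arrow_mem false i
  | mul x y hx hy => exact map_mul (RingQuot.mkAlgHom K (LamRel K m N)) x y ▸ mul_mem hx hy
  | add x y hx hy => exact map_add (RingQuot.mkAlgHom K (LamRel K m N)) x y ▸ S.add_mem hx hy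

/-- The length of the path `basisPath p`. Each nonzero path of length `0` or `2 * N` arises from
two edges; to list it only once, length `0` is reserved to orientation `true` and length `2 * N` to
orientation `false`. -/
def basisLength (p : Bool × ZMod m × Fin (2 * N)) : ℕ := p.2.2 + (!p.1).toNat

/-- The basis of `Λ_N` by the nonzero paths. -/
def basisPath (p : Bool × ZMod m × Fin (2 * N)) : Λ := path p.1 p.2.1 (basisLength p)

/-- The complement of `basisPath p` to a path of length `2 * N`; these elements form the basis dual
to `basisPath` with respect to `symmForm`. -/
def basisPathDual (p : Bool × ZMod m × Fin (2 * N)) : Λ :=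
  path (not^[basisLength p] p.1) p.2.1 (2 * N - basisLength p)

theorem exists_basisPath_eq_path (hN : N ≠ 0) (σ : Bool) (i : ZMod m) {n : ℕ} (hn : n ≤ 2 * N) :
    ∃ p, (basisPath p : Λ) = path σ i n := by
  obtain rfl | hn0 := eq_or_ne n 0
  · exact ⟨(true, source σ i, ⟨0, by omega⟩), rfl⟩
  obtain rfl | hn2N := eq_or_ne n (2 * N)
  · refine ⟨(false, source σ i - 1, ⟨2 * N - 1, by omega⟩), ?_⟩
    rw [path_two_mul_eq_of_source_eq hN (τ := false) (j := source σ i - 1)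
      (sub_add_cancel _ _).symm]
    exact congrArg (path _ _) (Nat.sub_add_cancel (by omega))
  cases σ
  · refine ⟨(false, i, ⟨n - 1, by omega⟩), ?_⟩
    exact congrArg (path _ _) (Nat.sub_add_cancel (by omega))
  · exact ⟨(true, i, ⟨n, by omega⟩), rfl⟩

theorem span_range_basisPath (hN : N ≠ 0) :
    Submodule.span K (Set.range basisPath) = (⊤ : Submodule K Λ) := by
  rw [eq_top_iff, ← span_range_path, Submodule.span_le]
  rintro _ ⟨⟨σ, i, n⟩, rfl⟩
  obtain hn | hn := le_or_gt n (2 * N)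
  · exact Submodule.subset_span (exists_basisPath_eq_path hN σ i hn)
  · simp [path_eq_zero_of_two_mul_lt hN σ i hn]

theorem symmForm_path_mul_path_iterate_not (hN : N ≠ 0) {σ τ : Bool} {n : ℕ} (hn : n ≤ 2 * N)
    (h0 : n = 0 → σ = τ) (h2N : n = 2 * N → σ = τ) (i j : ZMod m) :
    symmForm (path σ i n * path (not^[n] τ) j (2 * N - n) : Λ) =
      if σ = τ ∧ i = j then 1 else 0 := by
  split_ifs with h
  · rw [← h.1, ← h.2, path_mul_path_iterate_not, Nat.add_sub_cancel' hn, symmForm_path hN,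
      if_pos rfl]
  have hσ : (not^[n] σ = not^[n] τ ↔ σ = τ) := (Bool.involutive_not.injective.iterate n).eq_iff
  suffices (path σ i n * path (not^[n] τ) j (2 * N - n) : Λ) = 0 by rw [this, map_zero]
  obtain rfl | hn0 := eq_or_ne n 0
  · rw [path_zero, e_mul_path, if_neg]
    obtain rfl := h0 rfl
    exact fun hij => h ⟨rfl, source_injective _ hij⟩
  obtain rfl | hn2N := eq_or_ne n (2 * N)
  · obtain rfl := h2N rfl
    rw [Nat.sub_self, path_zero, path_mul_e, if_neg]
    exact fun hij => h ⟨rfl, source_injective _ hij⟩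
  · rw [path_mul_path _ _ _ _ hn0 (by omega), if_neg]
    exact fun hij => h ⟨hσ.1 hij.2, hij.1⟩

theorem symmForm_basisPath_mul_basisPathDual (hN : N ≠ 0) (p q : Bool × ZMod m × Fin (2 * N)) :
    symmForm (basisPath p * basisPathDual q : Λ) = if q = p then 1 else 0 := by
  obtain ⟨σ, i, k⟩ := p
  obtain ⟨τ, j, l⟩ := q
  rw [basisPath, basisPathDual]
  have hq : basisLength (τ, j, l) ≤ 2 * N := by
    cases τ <;> simp [basisLength]
  by_cases hlen : basisLength (σ, i, k) = basisLength (τ, j, l)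
  · rw [hlen, symmForm_path_mul_path_iterate_not hN hq]
    all_goals
      revert hlen
      cases σ <;> cases τ <;> simp [basisLength, Fin.ext_iff] <;> grind
  · rw [symmForm_path_mul_path_of_add_ne hN _ _ _ _ (by omega), if_neg]
    rintro ⟨⟩
    exact hlen rfl

theorem eq_zero_of_symmForm_mul_path_eq_zero (hN : N ≠ 0) {z : Λ}
    (hz : ∀ σ i n, symmForm (z * path σ i n) = 0) : z = 0 := by
  have hmem : z ∈ Submodule.span K (Set.range basisPath) :=
    span_range_basisPath (K := K) (m := m) hN ▸ Submodule.mem_top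
  have hdual (p q : Bool × ZMod m × Fin (2 * N)) :
      (symmForm ∘ₗ LinearMap.mulRight K (basisPathDual p)) (basisPath q : Λ) =
        if p = q then 1 else 0 :=
    symmForm_basisPath_mul_basisPathDual hN q p
  refine (sum_dual_apply_smul_eq_of_mem_span _ hdual hmem).symm.trans (Finset.sum_eq_zero ?_)
  exact fun p _ => by simp [basisPathDual, hz]

end SymmetrizingForm

section Centre

variable {K : Type} [Field K] {m N : ℕ} [NeZero m]

local notation "Λ" => Lam K m N

theorem mem_center_of_forall_commute_path {z : Λ} (hz : ∀ σ i n, Commute z (path σ i n)) :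
    z ∈ Subalgebra.center K Λ := by
  rw [Subalgebra.mem_center_iff]
  intro x
  have hx : x ∈ Submodule.span K (Set.range fun p : Bool × ZMod m × ℕ =>
      (path p.1 p.2.1 p.2.2 : Λ)) := span_range_path (K := K) (m := m) (N := N) ▸ Submodule.mem_top
  induction hx using Submodule.span_induction with
  | mem x hx =>
    obtain ⟨p, rfl⟩ := hx
    exact (hz _ _ _).symm
  | zero => rw [zero_mul, mul_zero]
  | add x y _ _ hx hy => rw [add_mul, mul_add, hx, hy]
  | smul c x _ hx => rw [smul_mul_assoc, mul_smul_comm, hx]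

theorem path_two_mul_mem_center (hN : N ≠ 0) (σ : Bool) (i : ZMod m) :
    (path σ i (2 * N) : Λ) ∈ Subalgebra.center K Λ := by
  refine mem_center_of_forall_commute_path fun τ j n => ?_
  obtain rfl | hn := eq_or_ne n 0
  · rw [Commute, SemiconjBy, path_zero, path_mul_e, e_mul_path, Bool.involutive_not.iterate_two_mul]
    simp only [id, eq_comm]
  · rw [Commute, SemiconjBy, path_mul_path _ _ _ _ (by omega) hn,
      path_mul_path _ _ _ _ hn (by omega), path_eq_zero_of_two_mul_lt hN _ _ (by omega),
      path_eq_zero_of_two_mul_lt hN _ _ (by omega), ite_self, ite_self]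

theorem path_true_add_path_false_mem_center (i : ZMod m) {s : ℕ} (hs : s ≠ 0) :
    (path true i (2 * s) + path false i (2 * s) : Λ) ∈ Subalgebra.center K Λ := by
  refine mem_center_of_forall_commute_path fun τ j n => ?_
  rw [Commute, SemiconjBy, add_mul, mul_add]
  obtain rfl | hn := eq_or_ne n 0
  · simp only [path_zero, path_mul_e, e_mul_path, Bool.involutive_not.iterate_two_mul, id, eq_comm]
  · have h2s : 2 * s ≠ 0 := by omega
    simp only [path_mul_path _ _ _ _ h2s hn, path_mul_path _ _ _ _ hn h2s,
      Bool.involutive_not.iterate_two_mul, id]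
    obtain rfl | hij := eq_or_ne i j
    · rw [add_comm n]
      cases τ <;> cases not^[n] _ <;> simp
    · simp [hij, hij.symm]

theorem centreBasisFam_inr_inl (hN : N ≠ 0) (i : ZMod m) :
    centreBasisFam K m N (.inr (.inl i)) = path true i (2 * N) :=
  arrow_mul_arrow_not_pow true i hN

theorem centreBasisFam_inr_inr (i : ZMod m) (s : Fin (N - 1)) :
    centreBasisFam K m N (.inr (.inr (i, s))) =
      path true i (2 * (s + 1)) + path false i (2 * (s + 1)) :=
  congrArg₂ (· + ·) (arrow_mul_arrow_not_pow true i s.val.succ_ne_zero)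
    (arrow_mul_arrow_not_pow false i s.val.succ_ne_zero)

theorem centreBasisFam_mem_center (hN : N ≠ 0) (k : Unit ⊕ ZMod m ⊕ (ZMod m × Fin (N - 1))) :
    centreBasisFam K m N k ∈ Subalgebra.center K Λ := by
  obtain _ | i | ⟨i, s⟩ := k
  · exact one_mem _
  · rw [centreBasisFam_inr_inl hN]
    exact path_two_mul_mem_center hN true i
  · rw [centreBasisFam_inr_inr]
    exact path_true_add_path_false_mem_center i s.val.succ_ne_zero

/-- Representatives of a basis of the quotient of `Λ_N` by its commutators, dual to
`centreBasisFam` with respect to `symmForm`. -/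
def cocentreFam : Unit ⊕ ZMod m ⊕ (ZMod m × Fin (N - 1)) → Λ
  | .inl _ => path true 0 (2 * N)
  | .inr (.inl i) => path true i 0
  | .inr (.inr (i, s)) => path true i (2 * (N - (s + 1)))

theorem symmForm_path_true_mul_path_true (hN : N ≠ 0) (i j : ZMod m) {s t : ℕ} (hst : s + t = N) :
    symmForm (path true i (2 * s) * path true j (2 * t) : Λ) = if i = j then 1 else 0 := by
  have h := symmForm_path_mul_path_iterate_not (K := K) hN (n := 2 * s) (by omega)
    (fun _ => rfl) (fun _ => rfl : _ → true = true) i j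
  rw [Bool.involutive_not.iterate_two_mul, ← Nat.mul_sub, Nat.sub_eq_of_eq_add' hst.symm] at h
  simpa using h

theorem symmForm_centreBasisFam_mul_cocentreFam (hN : N ≠ 0)
    (k l : Unit ⊕ ZMod m ⊕ (ZMod m × Fin (N - 1))) :
    symmForm (centreBasisFam K m N k * cocentreFam l) = if l = k then 1 else 0 := by
  obtain _ | i | ⟨i, s⟩ := k
  · rw [centreBasisFam, one_mul]
    obtain _ | j | ⟨j, t⟩ := l
    · simp [cocentreFam, symmForm_path hN]
    · simp [cocentreFam, symmForm_path hN, hN]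
    · rw [cocentreFam, symmForm_path hN, if_neg (by omega), if_neg (by simp)]
  · rw [centreBasisFam_inr_inl hN]
    obtain _ | j | ⟨j, t⟩ := l
    · rw [cocentreFam, symmForm_path_mul_path_of_add_ne hN _ _ _ _ (by omega), if_neg (by simp)]
    · rw [cocentreFam, ← mul_zero 2, symmForm_path_true_mul_path_true hN _ _ (add_zero N)]
      simp [eq_comm]
    · rw [cocentreFam, symmForm_path_mul_path_of_add_ne hN _ _ _ _ (by omega), if_neg (by simp)]
  · rw [centreBasisFam_inr_inr, add_mul, map_add]
    obtain _ | j | ⟨j, t⟩ := l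
    · rw [cocentreFam, symmForm_path_mul_path_of_add_ne hN _ _ _ _ (by omega),
        symmForm_path_mul_path_of_add_ne hN _ _ _ _ (by omega), if_neg (by simp), add_zero]
    · rw [cocentreFam, symmForm_path_mul_path_of_add_ne hN _ _ _ _ (by omega),
        symmForm_path_mul_path_of_add_ne hN _ _ _ _ (by omega), if_neg (by simp), add_zero]
    · rw [cocentreFam]
      obtain rfl | hst := eq_or_ne s t
      · rw [symmForm_path_true_mul_path_true hN _ _ (by omega),
          path_mul_path _ _ _ _ (by omega) (by omega), Bool.involutive_not.iterate_two_mul]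
        simp [eq_comm]
      · rw [symmForm_path_mul_path_of_add_ne hN _ _ _ _ (by omega),
          symmForm_path_mul_path_of_add_ne hN _ _ _ _ (by omega), if_neg, add_zero]
        simp [hst.symm]

theorem symmForm_mul_mul_comm_of_mem_center {z : Λ} (hz : z ∈ Subalgebra.center K Λ) (x y : Λ) :
    symmForm (z * (x * y)) = symmForm (z * (y * x)) := by
  rw [Subalgebra.mem_center_iff] at hz
  rw [← mul_assoc, symmForm_mul_comm, ← mul_assoc, hz, mul_assoc]

theorem symmForm_mul_path_not_of_mem_center {z : Λ} (hz : z ∈ Subalgebra.center K Λ) (σ : Bool)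
    (i : ZMod m) {s : ℕ} (hs : s ≠ 0) :
    symmForm (z * path (!σ) i (2 * s)) = symmForm (z * path σ i (2 * s)) := by
  obtain ⟨s, rfl⟩ := Nat.exists_eq_succ_of_ne_zero hs
  have arrow_mul_rest (σ : Bool) :
      (path σ i 1 * path (!σ) i (2 * s + 1) : Λ) = path σ i (2 * (s + 1)) :=
    (path_mul_path_iterate_not σ i 1 (2 * s + 1)).trans (congrArg (path σ i) (by ring))
  have rest_mul_arrow (σ : Bool) :
      (path σ i (2 * s + 1) * path (!σ) i 1 : Λ) = path σ i (2 * (s + 1)) := by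
    rw [Nat.mul_succ, ← path_mul_path_iterate_not σ i (2 * s + 1) 1,
      Bool.involutive_not.iterate_two_mul_add_one]
  rw [← arrow_mul_rest σ, symmForm_mul_mul_comm_of_mem_center hz, ← rest_mul_arrow, Bool.not_not]

theorem symmForm_mul_path_of_odd (hm : 2 ≤ m) {z : Λ} (hz : z ∈ Subalgebra.center K Λ) (σ : Bool)
    (i : ZMod m) {n : ℕ} (hn : Odd n) : symmForm (z * path σ i n) = 0 := by
  rw [← e_source_mul_path, symmForm_mul_mul_comm_of_mem_center hz, path_mul_e,
    Bool.involutive_not.iterate_odd hn, if_neg (source_not_ne hm σ i), mul_zero, map_zero]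

theorem symmForm_mul_path_two_mul_of_mem_center (hN : N ≠ 0) {z : Λ}
    (hz : z ∈ Subalgebra.center K Λ) (i : ZMod m) :
    symmForm (z * path true i (2 * N)) = symmForm (z * path true 0 (2 * N)) := by
  have hper : Function.Periodic (fun i : ZMod m => symmForm (z * path true i (2 * N))) 1 := by
    intro i
    have hsource : source true (i + 1) = source false i := rfl
    beta_reduce
    rw [path_two_mul_eq_of_source_eq hN hsource]
    exact symmForm_mul_path_not_of_mem_center hz true i hN
  simpa using hper.nat_mul_eq i.val

theorem symmForm_mul_path_eq_zero_of_mem_center (hm : 2 ≤ m) (hN : N ≠ 0) {z : Λ}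
    (hz : z ∈ Subalgebra.center K Λ) (h : ∀ k, symmForm (z * cocentreFam k) = 0) (σ : Bool)
    (i : ZMod m) (n : ℕ) : symmForm (z * path σ i n) = 0 := by
  obtain hn | hn := n.even_or_odd.symm
  · exact symmForm_mul_path_of_odd hm hz σ i hn
  obtain ⟨s, rfl⟩ := even_iff_exists_two_mul.1 hn
  obtain rfl | hs := eq_or_ne s 0
  · exact h (.inr (.inl (source σ i)))
  suffices symmForm (z * path true i (2 * s)) = 0 by
    cases σ
    · rwa [← symmForm_mul_path_not_of_mem_center hz false i hs]
    · exact this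
  obtain hsN | rfl | hsN := lt_trichotomy s N
  · have hk := h (.inr (.inr (i, ⟨N - (s + 1), by omega⟩)))
    rwa [cocentreFam, show N - (N - (s + 1) + 1) = s by omega] at hk
  · rw [symmForm_mul_path_two_mul_of_mem_center hN hz]
    exact h (.inl ())
  · rw [path_eq_zero_of_two_mul_lt hN _ _ (by omega), mul_zero, map_zero]

theorem linearIndependent_centreBasisFam (hN : N ≠ 0) :
    LinearIndependent K (centreBasisFam K m N) :=
  .of_pairwise_dual_eq_zero_one _ (fun k => symmForm ∘ₗ LinearMap.mulRight K (cocentreFam k))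
    (fun k l hkl => (symmForm_centreBasisFam_mul_cocentreFam hN l k).trans (if_neg hkl))
    fun k => (symmForm_centreBasisFam_mul_cocentreFam hN k k).trans (if_pos rfl)

theorem span_range_centreBasisFam (hm : 2 ≤ m) (hN : N ≠ 0) :
    Submodule.span K (Set.range (centreBasisFam K m N)) =
      Subalgebra.toSubmodule (Subalgebra.center K Λ) := by
  refine span_range_eq_of_dual_apply
    (fun k => symmForm ∘ₗ LinearMap.mulRight K (cocentreFam k))
    (fun k l => ?_) (centreBasisFam_mem_center hN) fun z hz h => ?_
  · exact symmForm_centreBasisFam_mul_cocentreFam hN l k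
  · exact eq_zero_of_symmForm_mul_path_eq_zero hN
      (symmForm_mul_path_eq_zero_of_mem_center hm hN hz h)

end Centre

end Lam

theorem stmt3 (hm : 2 ≤ m) (hN : 1 ≤ N) :
    Module.finrank K (Subalgebra.center K (Lam K m N)) = N * m + 1 ∧
    LinearIndependent K (centreBasisFam K m N) ∧
    Submodule.span K (Set.range (centreBasisFam K m N)) =
      Subalgebra.toSubmodule (Subalgebra.center K (Lam K m N)) := by
  have hN0 : N ≠ 0 := Nat.one_le_iff_ne_zero.1 hN
  have hindep := Lam.linearIndependent_centreBasisFam (K := K) (m := m) hN0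
  have hspan := Lam.span_range_centreBasisFam (K := K) hm hN0
  refine ⟨?_, hindep, hspan⟩
  calc Module.finrank K (Subalgebra.center K (Lam K m N))
      = Module.finrank K (Submodule.span K (Set.range (centreBasisFam K m N))) := by
        rw [hspan]; rfl
    _ = Fintype.card (Unit ⊕ ZMod m ⊕ (ZMod m × Fin (N - 1))) := finrank_span_eq_card hindep
    _ = 1 + (m + m * (N - 1)) := by simp [ZMod.card]
    _ = N * m + 1 := by
      obtain ⟨n, rfl⟩ := Nat.exists_eq_add_of_le hN
      rw [Nat.add_sub_cancel_left]
      ring
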